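/- Let F be a field of characteristic ≠ 2 and let q be a nondegenerate quadratic form over F. If q becomes isotropic over a field extension L/F of odd finite degree, then q is isotropic over F. -/

import Mathlib

universe u

open scoped TensorProduct

/-- A quadratic form is nondegenerate if its polar form has trivial radical. -/
def QFNondegenerate {F : Type u} [Field F] {V : Type u} [AddCommGroup V] [Module F V]
    (q : QuadraticForm F V) : Prop :=
  ∀ v : V, (∀ w : V, QuadraticMap.polar q v w = 0) → v = 0

/-- A quadratic form is isotropic if it vanishes on some nonzero vector. -/
def QFIsotropic {F : Type u} [Field F] {V : Type u} [AddCommGroup V] [Module F V]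
    (q : QuadraticForm F V) : Prop :=
  ∃ v : V, v ≠ 0 ∧ q v = 0

open Polynomial in
/-- A quadratic polynomial with coefficient matrix `a` evaluated in an algebra. -/
def sprQ {F : Type u} [CommRing F] (A : Type u) [CommRing A] [Algebra F A] {n : ℕ}
    (a : Fin n → Fin n → F) (x : Fin n → A) : A :=
  ∑ i, ∑ j, algebraMap F A (a i j) * (x i * x j)

theorem sprQ_map {F : Type u} [CommRing F] {A B : Type u} [CommRing A] [Algebra F A]
    [CommRing B] [Algebra F B] {n : ℕ}
    (a : Fin n → Fin n → F) (x : Fin n → A) (φ : A →ₐ[F] B) :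
    φ (sprQ A a x) = sprQ B a (fun i => φ (x i)) := by
  simp [sprQ, map_sum]

theorem sprQ_smul {F : Type u} [CommRing F] {A : Type u} [CommRing A] [Algebra F A]
    {n : ℕ} (a : Fin n → Fin n → F) (x : Fin n → A) (c : A) :
    sprQ A a (fun i => c * x i) = c * c * sprQ A a x := by
  simp only [sprQ, Finset.mul_sum]
  refine Finset.sum_congr rfl fun i _ => Finset.sum_congr rfl fun j _ => ?_
  ring

open Polynomial in
theorem spr_odd_factor {F : Type u} [Field F] : ∀ (d : ℕ) (h : F[X]), h.natDegree = d → Odd d →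
    ∃ p : F[X], Irreducible p ∧ Odd p.natDegree ∧ p ∣ h := by
  intro d
  induction d using Nat.strong_induction_on with
  | _ d ih =>
    intro h hd hodd
    have h0 : h ≠ 0 := by rintro rfl; simp at hd; subst hd; simp at hodd
    have hu : ¬ IsUnit h := by
      intro hu
      rw [natDegree_eq_zero_of_isUnit hu] at hd
      subst hd; simp at hodd
    obtain ⟨p, hp, k, rfl⟩ := WfDvdMonoid.exists_irreducible_factor hu h0
    by_cases hpo : Odd p.natDegree
    · exact ⟨p, hp, hpo, k, rfl⟩
    · have hk0 : k ≠ 0 := right_ne_zero_of_mul h0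
      rw [natDegree_mul hp.ne_zero hk0] at hd
      have hpos := hp.natDegree_pos
      have : Odd k.natDegree := by
        rw [Nat.not_odd_iff_even] at hpo
        rw [← hd] at hodd
        by_contra hc
        rw [Nat.not_odd_iff_even] at hc
        exact (Nat.not_odd_iff_even.2 (hpo.add hc)) hodd
      obtain ⟨r, hr, hro, hrk⟩ := ih k.natDegree (by omega) k rfl this
      exact ⟨r, hr, hro, hrk.mul_left p⟩

open Polynomial in
theorem spr_core {F : Type u} [Field F] {n : ℕ} (a : Fin n → Fin n → F)
    (han : ∀ x : Fin n → F, sprQ F a x = 0 → x = 0) :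
    ∀ (d : ℕ) (f : F[X]), f.natDegree = d → Odd d → Irreducible f →
    ∀ g : Fin n → F[X], f ∣ sprQ F[X] a g → ∀ i, f ∣ g i := by
  intro d
  induction d using Nat.strong_induction_on with
  | _ d ih =>
    intro f hfd hodd hf g hg
    by_contra hnd
    have hd1 : 0 < d := hodd.pos
    have hex : ∃ m, ∃ g : Fin n → F[X], g ≠ 0 ∧ (∀ i, (g i).natDegree ≤ m) ∧
        f ∣ sprQ F[X] a g := by
      exact ⟨_, g, by rintro rfl; simp at hnd,
        fun i => Finset.le_sup (f := fun i => (g i).natDegree) (Finset.mem_univ i), hg⟩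
    have hred : ∃ g : Fin n → F[X], g ≠ 0 ∧ (∀ i, (g i).natDegree ≤ d - 1) ∧
        f ∣ sprQ F[X] a g := by
      refine ⟨fun i => g i % f, ?_, ?_, ?_⟩
      · intro h
        apply hnd
        intro i
        exact (EuclideanDomain.mod_eq_zero).1 (congrFun h i)
      · intro i
        have := natDegree_mod_lt (g i) (q := f) (by omega)
        change (g i % f).natDegree ≤ d - 1
        omega
      · rw [← AdjoinRoot.mk_eq_zero] at hg ⊢
        have e1 := sprQ_map a g (AdjoinRoot.mkₐ f)
        have e2 := sprQ_map a (fun i => g i % f) (AdjoinRoot.mkₐ f)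
        have e3 : ∀ i, AdjoinRoot.mkₐ f (g i % f) = AdjoinRoot.mkₐ f (g i) := by
          intro i
          change AdjoinRoot.mk f _ = AdjoinRoot.mk f _
          rw [AdjoinRoot.mk_eq_mk]
          refine ⟨-(g i / f), ?_⟩
          linear_combination (EuclideanDomain.div_add_mod (g i) f)
        simp only [e3] at e2
        exact e2.trans (e1.symm.trans hg)
    classical
    let m := Nat.find hex
    obtain ⟨g, hg0, hgm, hfg⟩ := Nat.find_spec hex
    have hmin : ∀ k < m, ¬ _ := fun k hk => Nat.find_min hex hk
    have hmd : m ≤ d - 1 := Nat.find_min' hex hred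
    change ∀ i, (g i).natDegree ≤ m at hgm
    have hlead : (fun i => (g i).coeff m) ≠ 0 := by
      intro hz
      have hz : ∀ i, (g i).coeff m = 0 := fun i => congrFun hz i
      rcases Nat.eq_zero_or_pos m with hm | hm
      · apply hg0
        funext i
        have h1 := eq_C_of_natDegree_le_zero ((hgm i).trans hm.le)
        have h2 := hz i
        rw [hm] at h2
        rw [h1, h2]; simp
      · refine hmin (m - 1) (by omega) ⟨g, hg0, fun i => ?_, hfg⟩
        by_contra hc
        have he : (g i).natDegree = m := by have := hgm i; omega
        have h3 := hz i
        rw [← he, coeff_natDegree, leadingCoeff_eq_zero] at h3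
        rw [h3] at he
        simp at he
        omega
    have hcoeff : (sprQ F[X] a g).coeff (m + m) = sprQ F a (fun i => (g i).coeff m) := by
      simp only [sprQ, finsetSum_coeff, algebraMap_eq, coeff_C_mul, Algebra.algebraMap_self,
        RingHom.id_apply]
      refine Finset.sum_congr rfl fun i _ => Finset.sum_congr rfl fun j _ => ?_
      rw [coeff_mul_add_eq_of_natDegree_le (hgm i) (hgm j)]
    have hcne : (sprQ F[X] a g).coeff (m + m) ≠ 0 := by
      rw [hcoeff]; exact fun h => hlead (han _ h)
    have hdeg : (sprQ F[X] a g).natDegree = m + m := by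
      refine le_antisymm ?_ (le_natDegree_of_ne_zero hcne)
      refine natDegree_sum_le_of_forall_le _ _ fun i _ =>
        natDegree_sum_le_of_forall_le _ _ fun j _ => ?_
      rw [algebraMap_eq]
      exact (natDegree_C_mul_le _ _).trans (natDegree_mul_le_of_le (hgm i) (hgm j))
    obtain ⟨h, hh⟩ := hfg
    have hne : f * h ≠ 0 := by
      rw [← hh]; intro h; rw [h] at hcne; simp at hcne
    have hh0 : h ≠ 0 := right_ne_zero_of_mul hne
    rw [hh, natDegree_mul hf.ne_zero hh0] at hdeg
    have hho : Odd h.natDegree := by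
      obtain ⟨k, hk⟩ := hodd
      exact ⟨m - k - 1, by omega⟩
    obtain ⟨p, hp, hpo, hph⟩ := spr_odd_factor _ h rfl hho
    have hpd : p.natDegree < d := by
      have := natDegree_le_of_dvd hph hh0
      omega
    have hall := ih p.natDegree hpd p rfl hpo hp g (hh ▸ hph.mul_left f)
    choose g' hg' using hall
    have hgg : g = fun i => p * g' i := funext hg'
    have hg'0 : g' ≠ 0 := by
      rintro rfl; apply hg0; rw [hgg]; funext i; simp
    have hcop : IsCoprime f p := by
      rw [hf.coprime_iff_not_dvd]
      intro hfp
      have := natDegree_le_of_dvd hfp hp.ne_zero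
      omega
    have hfg' : f ∣ sprQ F[X] a g' := by
      have : f ∣ p * p * sprQ F[X] a g' := by
        rw [← sprQ_smul, ← hgg, hh]; exact dvd_mul_right _ _
      exact (hcop.mul_right hcop).dvd_of_dvd_mul_left this
    have hpp := hp.natDegree_pos
    have hdeg' : ∀ i, g' i ≠ 0 → p.natDegree + (g' i).natDegree ≤ m := by
      intro i hi
      rw [← natDegree_mul hp.ne_zero hi, ← hg' i]; exact hgm i
    have hm1 : 1 ≤ m := by
      obtain ⟨i, hi⟩ := Function.ne_iff.1 hg'0
      have := hdeg' i hi
      omega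
    refine hmin (m - 1) (by omega) ⟨g', hg'0, fun i => ?_, hfg'⟩
    by_cases hi : g' i = 0
    · simp [hi]
    · have := hdeg' i hi
      omega

theorem spr_field : ∀ (d : ℕ) (F L : Type u) [Field F] [Field L] [Algebra F L]
    [FiniteDimensional F L] (_ : Module.finrank F L = d) (_ : Odd d) {n : ℕ}
    (a : Fin n → Fin n → F) (_ : ∀ x : Fin n → F, sprQ F a x = 0 → x = 0),
    ∀ x : Fin n → L, sprQ L a x = 0 → x = 0 := by
  intro d
  induction d using Nat.strong_induction_on with
  | _ d ih =>
    intro F L _ _ _ _ hd hodd n a han x hx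
    by_cases hbot : (⊥ : IntermediateField F L) = ⊤
    · have hs : ∀ y : L, ∃ z : F, algebraMap F L z = y := fun y => by
        have : y ∈ (⊥ : IntermediateField F L) := hbot ▸ IntermediateField.mem_top
        exact IntermediateField.mem_bot.1 this
      choose s hs using hs
      have e := sprQ_map a (fun i => s (x i)) (Algebra.ofId F L)
      simp only [Algebra.ofId_apply, hs] at e
      have h0 : sprQ F a (fun i => s (x i)) = 0 := by
        apply (algebraMap F L).injective
        rw [e, map_zero]; exact hx
      funext i
      have := congrFun (han _ h0) i
      simp only [Pi.zero_apply] at this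
      rw [← hs (x i), this]; simp
    · have : ∃ α : L, α ∉ (⊥ : IntermediateField F L) := by
        by_contra hc
        push Not at hc
        exact hbot (eq_top_iff.2 fun y _ => hc y)
      obtain ⟨α, hα⟩ := this
      have hint : IsIntegral F α := Algebra.IsIntegral.isIntegral α
      let K := IntermediateField.adjoin F {α}
      have htower : Module.finrank F K * Module.finrank K L = d := by
        rw [Module.finrank_mul_finrank, hd]
      have hK1 : Module.finrank F K ≠ 1 := by
        intro h1
        rw [IntermediateField.finrank_eq_one_iff, IntermediateField.adjoin_simple_eq_bot_iff] at h1
        exact hα h1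
      have hKpos : 0 < Module.finrank F K := Module.finrank_pos
      have hLpos : 0 < Module.finrank K L := Module.finrank_pos
      rw [← htower, Nat.odd_mul] at hodd
      have hlt : Module.finrank K L < d := by rw [← htower]; nlinarith [show 2 ≤ Module.finrank F K by omega]
      have key : ∀ y : Fin n → K, sprQ K a y = 0 → y = 0 := by
        intro y hy
        have hf := minpoly.irreducible hint
        let pb := IntermediateField.adjoin.powerBasis hint
        have hg : ∀ z : K, ∃ g : Polynomial F,
            Polynomial.aeval (IntermediateField.AdjoinSimple.gen F α) g = z := by
          intro z
          obtain ⟨g, hg⟩ := pb.exists_eq_aeval' z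
          exact ⟨g, by rw [hg]; simp [pb]⟩
        choose s hs using hg
        have hmin : minpoly F (IntermediateField.AdjoinSimple.gen F α) = minpoly F α :=
          IntermediateField.minpoly_gen F α
        have e := sprQ_map a (fun i => s (y i))
          (Polynomial.aeval (IntermediateField.AdjoinSimple.gen F α))
        simp only [hs] at e
        have hdv := minpoly.dvd F _ (e.trans hy)
        rw [hmin] at hdv
        have hr := spr_core a han _ (minpoly F α) rfl
          (by rw [← IntermediateField.adjoin.finrank hint]; exact hodd.1) hf _ hdv
        funext i
        obtain ⟨k, hk⟩ := hr i
        rw [← hs (y i), hk, ← hmin]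
        simp
      refine ih _ hlt K L rfl hodd.2 (fun i j => algebraMap F K (a i j)) ?_ x ?_
      · intro y hy
        exact key y hy
      · rw [← hx]; rfl

theorem stmt7 (F : Type u) [Field F] [Invertible (2 : F)]
    (V : Type u) [AddCommGroup V] [Module F V] [FiniteDimensional F V]
    (q : QuadraticForm F V) (hq : QFNondegenerate q)
    (L : Type u) [Field L] [Algebra F L] [FiniteDimensional F L]
    (hodd : Odd (Module.finrank F L))
    (hiso : QFIsotropic (q.baseChange L)) :
    QFIsotropic q := by
  by_contra hc
  obtain ⟨v, hv0, hv⟩ := hiso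
  let b := Module.finBasis F V
  letI : Invertible (2 : L) :=
    (Invertible.map (algebraMap F L) 2).copy 2 (map_ofNat _ _).symm
  let a : Fin (Module.finrank F V) → Fin (Module.finrank F V) → F :=
    fun i j => QuadraticMap.associated (R := F) q (b i) (b j)
  let bL := b.baseChange L
  have hF : ∀ x, sprQ F a x = q (∑ i, x i • b i) := by
    intro x
    rw [← QuadraticMap.associated_eq_self_apply F q]
    simp only [sprQ, a, map_sum, map_smul, LinearMap.sum_apply, LinearMap.smul_apply,
      Finset.mul_sum, smul_eq_mul, Algebra.algebraMap_self, RingHom.id_apply]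
    rw [Finset.sum_comm]
    refine Finset.sum_congr rfl fun i _ => Finset.sum_congr rfl fun j _ => ?_
    ring
  have hL : ∀ x, sprQ L a x = q.baseChange L (∑ i, x i • bL i) := by
    intro x
    rw [← QuadraticMap.associated_eq_self_apply L (q.baseChange L),
      QuadraticForm.associated_baseChange]
    simp only [sprQ, a, bL, map_sum, map_smul, LinearMap.sum_apply, LinearMap.smul_apply,
      Finset.mul_sum, smul_eq_mul, Module.Basis.baseChange_apply]
    rw [Finset.sum_comm]
    refine Finset.sum_congr rfl fun i _ => Finset.sum_congr rfl fun j _ => ?_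
    rw [LinearMap.BilinForm.baseChange_tmul]
    simp only [Algebra.smul_def]
    ring
  have han : ∀ x, sprQ F a x = 0 → x = 0 := by
    intro x hx
    by_contra hx0
    refine hc ⟨_, ?_, (hF x).symm.trans hx⟩
    intro h
    exact hx0 (funext (Fintype.linearIndependent_iff.1 b.linearIndependent x h))
  have := spr_field _ F L rfl hodd a han (fun i => bL.repr v i)
    (by rw [hL, bL.sum_repr, hv])
  apply hv0
  rw [← bL.sum_repr v]
  exact Finset.sum_eq_zero fun i _ => by rw [congrFun this i]; simp
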